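/- Let N be a positive integer, D a positive integer that is not a perfect square, and k ≥ 2 an integer. For real x define 𝒮(x) = ∑'_{(a,b,c) ∈ ℤ³, b²−4ac=D, N∣a, a<0, ax²+bx+c>0} (ax² + bx + c)^{k−1}, an unconditional sum (finite for rational x and convergent for almost every real x). Then ∫₀¹ 𝒮(x) dx = (√π · Γ(k)/(2^{2k−1} · Γ(k + 1/2))) · D^{k−1/2} · ∑_{a ≥ 1, N∣a} a^{−k} · #{b ∈ ℤ : 0 ≤ b < 2a and 4a ∣ b² − D}, where the integral is the Lebesgue integral on [0,1] and the series on the right converges. -/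

import Mathlib

open MeasureTheory Real

/-!
Write a form with negative leading coefficient as `[-a, b, c]` with `a ≥ 1`. Completing the square,
`-a x² + b x + c = D/(4a) - a (x - b/(2a))²`, and `c` is determined by `(a, b)` subject to
`4a ∣ b² - D`, a condition depending only on `b` modulo `2a`. Writing `b = b₀ - 2am` with
`0 ≤ b₀ < 2a` and `m ∈ ℤ` (`toForm_bijective`), the positive part of the form at `x` is a fixed
compactly supported bump evaluated at `x + m - b₀/(2a)` (`toForm_eval`). Summing over `m` unfolds
the integral over `[0,1]` to an integral over `ℝ`, which is a beta integral (`integral_bump`) equal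
to the stated constant times `a^{-k}`; there is one such contribution for each `b₀`.

Exchanging sum and integral requires the series over `a` to converge. This is where `k = 2` is
delicate: the trivial bound `2a` for the number of `b₀` is not enough. Instead the number of square
roots of `D` modulo `m` is bounded by `(4D + 1) d(m)` (`card_sqrt_mod_le`), and `d(m) = O(√m)`, so
the terms are `O(a^{-3/2})` (`summable_rootCount`).
-/

/-! ### Counting square roots modulo `m` -/

/-- Divisors pair up as `d ↔ m / d`, and one member of each pair is at most `√m`. -/
lemma card_divisors_le_sqrt (m : ℕ) : m.divisors.card ≤ 2 * (m.sqrt + 1) := by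
  have hsub : m.divisors ⊆ Finset.range (m.sqrt + 1) ∪
      (Finset.range (m.sqrt + 1)).image (fun d => m / d) := by
    intro d hd
    obtain ⟨⟨e, he⟩, hm⟩ := Nat.mem_divisors.1 hd
    simp only [Finset.mem_union, Finset.mem_range, Finset.mem_image, Nat.lt_succ_iff]
    have hd0 : 0 < d := Nat.pos_of_mem_divisors hd
    have he0 : 0 < e := Nat.pos_of_ne_zero (by rintro rfl; simp at he; exact hm he)
    rcases le_total d e with h | h
    · left
      rw [Nat.le_sqrt, he]
      exact Nat.mul_le_mul_left _ h
    · right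
      refine ⟨e, ?_, ?_⟩
      · rw [Nat.le_sqrt, he]
        exact Nat.mul_le_mul_right _ h
      · rw [he, Nat.mul_div_cancel _ he0]
  calc m.divisors.card ≤ _ := Finset.card_le_card hsub
    _ ≤ _ := Finset.card_union_le _ _
    _ ≤ (m.sqrt + 1) + (m.sqrt + 1) := by
      refine Nat.add_le_add (by simp) (Finset.card_image_le.trans (by simp))
    _ = _ := by ring

/-- Fix one root `r`. A root `t` determines the divisor `g = gcd(t - r, m)`, and then
`t ≡ r mod g` and `t ≡ -r mod m/g`, so `t` is determined modulo `lcm(g, m/g)`. The number of lifts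
modulo `m` is `e = gcd(g, m/g)`; since `e ∣ 2r` and `e² ∣ m ∣ r² - D`, one gets `e² ∣ 4D`. -/
lemma card_sqrt_mod_le (m D : ℕ) (hm : 0 < m) (hD : 0 < D) :
    ((Finset.Ico (0 : ℤ) m).filter (fun b => (m : ℤ) ∣ b ^ 2 - (D : ℤ))).card
      ≤ m.divisors.card * (4 * D + 1) := by
  rcases Finset.eq_empty_or_nonempty
    ((Finset.Ico (0 : ℤ) m).filter (fun b => (m : ℤ) ∣ b ^ 2 - (D : ℤ))) with h0 | ⟨r, hr⟩
  · rw [h0]; simp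
  have hr2 : (m : ℤ) ∣ r ^ 2 - D := (Finset.mem_filter.1 hr).2
  let g : ℤ → ℕ := fun t => Int.gcd (t - r) m
  let L : ℕ → ℕ := fun d => Nat.lcm d (m / d)
  have hgm : ∀ t, g t ∣ m := fun t => by
    have := Int.gcd_dvd_right (t - r) m
    exact Int.natCast_dvd_natCast.1 this
  have hg1 : ∀ t, (g t : ℤ) ∣ t - r := fun t => Int.gcd_dvd_left _ _
  have hgpos : ∀ t, 0 < g t := fun t => Nat.pos_of_dvd_of_pos (hgm t) hm
  have hh : ∀ t, (m : ℤ) ∣ t ^ 2 - D → ((m / g t : ℕ) : ℤ) ∣ t + r := by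
    intro t ht
    have h1 : (m : ℤ) ∣ (t - r) * (t + r) := by
      rw [show (t - r) * (t + r) = t ^ 2 - D - (r ^ 2 - D) by ring]
      exact dvd_sub ht hr2
    obtain ⟨u, hu⟩ := hg1 t
    obtain ⟨h, hh⟩ := hgm t
    have hmh : m / g t = h := by
      conv_lhs => rw [hh]
      exact Nat.mul_div_cancel_left _ (hgpos t)
    rw [hmh]
    have hcop : IsCoprime (h : ℤ) u := by
      have := Int.gcd_div_gcd_div_gcd (i := t - r) (j := m) (hgpos t)
      have e1 : (t - r) / (Int.gcd (t - r) m : ℤ) = u :=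
        Int.ediv_eq_of_eq_mul_right (by exact_mod_cast (hgpos t).ne') hu
      have e2 : (m : ℤ) / (Int.gcd (t - r) m : ℤ) = h :=
        Int.ediv_eq_of_eq_mul_right (by exact_mod_cast (hgpos t).ne') (by exact_mod_cast hh)
      rw [e1, e2] at this
      exact (Int.isCoprime_iff_gcd_eq_one.2 this).symm
    have h2 : (g t : ℤ) * h ∣ g t * (u * (t + r)) := by
      have : (m : ℤ) = g t * h := by exact_mod_cast hh
      rw [← this, ← mul_assoc, ← hu]; exact h1
    have h3 : (h : ℤ) ∣ u * (t + r) :=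
      Int.dvd_of_mul_dvd_mul_left (by exact_mod_cast (hgpos t).ne') h2
    exact hcop.dvd_of_dvd_mul_left h3
  have hgcd : ∀ t, (m : ℤ) ∣ t ^ 2 - D → Nat.gcd (g t) (m / g t) ≤ 4 * D := by
    intro t ht
    set e := Nat.gcd (g t) (m / g t) with he
    have e1 : (e : ℤ) ∣ t - r :=
      (Int.natCast_dvd_natCast.2 (Nat.gcd_dvd_left _ _)).trans (hg1 t)
    have e2 : (e : ℤ) ∣ t + r :=
      (Int.natCast_dvd_natCast.2 (Nat.gcd_dvd_right _ _)).trans (hh t ht)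
    have e3 : (e : ℤ) ∣ 2 * r := by
      rw [show 2 * r = t + r - (t - r) by ring]
      exact dvd_sub e2 e1
    have e4 : (e : ℤ) ^ 2 ∣ 4 * r ^ 2 := by
      rw [show 4 * r ^ 2 = (2 * r) ^ 2 by ring]
      exact pow_dvd_pow_of_dvd e3 2
    have e5 : (e : ℤ) ^ 2 ∣ m := by
      have : e * e ∣ g t * (m / g t) := mul_dvd_mul (Nat.gcd_dvd_left _ _) (Nat.gcd_dvd_right _ _)
      rw [Nat.mul_div_cancel' (hgm t)] at this
      rw [sq]; exact_mod_cast this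
    have e6 : (e : ℤ) ^ 2 ∣ 4 * D := by
      rw [show 4 * (D : ℤ) = 4 * r ^ 2 - 4 * (r ^ 2 - D) by ring]
      exact dvd_sub e4 ((e5.trans hr2).mul_left 4)
    have e7 : e ^ 2 ∣ 4 * D := by exact_mod_cast e6
    have e8 := Nat.le_of_dvd (by positivity) e7
    nlinarith
  have hL : ∀ t, L (g t) * Nat.gcd (g t) (m / g t) = m := fun t => by
    show Nat.lcm _ _ * _ = _
    rw [mul_comm, Nat.gcd_mul_lcm, Nat.mul_div_cancel' (hgm t)]
  have hLpos : ∀ t, 0 < L (g t) := fun t =>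
    Nat.pos_of_ne_zero (fun h => by have := hL t; rw [h, zero_mul] at this; omega)
  rw [← Finset.card_range (4 * D + 1), ← Finset.card_product]
  refine Finset.card_le_card_of_injOn (fun t => (g t, (t / (L (g t) : ℤ)).toNat)) ?_ ?_
  · intro t ht
    obtain ⟨ht1, ht2⟩ := Finset.mem_filter.1 (Finset.mem_coe.1 ht)
    obtain ⟨hta, htb⟩ := Finset.mem_Ico.1 ht1
    simp only [Finset.coe_product, Set.mem_prod, Finset.mem_coe, Nat.mem_divisors,
      Finset.mem_range]
    refine ⟨⟨hgm t, hm.ne'⟩, ?_⟩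
    have h1 : t / (L (g t) : ℤ) < Nat.gcd (g t) (m / g t) := by
      apply Int.ediv_lt_of_lt_mul (by exact_mod_cast hLpos t)
      have : (m : ℤ) = Nat.gcd (g t) (m / g t) * L (g t) := by
        rw [mul_comm]; exact_mod_cast (hL t).symm
      rw [← this]; exact htb
    have h2 := hgcd t ht2
    omega
  · intro t ht t' ht' heq
    obtain ⟨ht1, ht2⟩ := Finset.mem_filter.1 (Finset.mem_coe.1 ht)
    obtain ⟨hta, htb⟩ := Finset.mem_Ico.1 ht1
    obtain ⟨ht1', ht2'⟩ := Finset.mem_filter.1 (Finset.mem_coe.1 ht')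
    obtain ⟨hta', htb'⟩ := Finset.mem_Ico.1 ht1'
    simp only [Prod.mk.injEq] at heq
    obtain ⟨hg, hq⟩ := heq
    have d1 : (g t : ℤ) ∣ t - t' := by
      rw [show t - t' = t - r - (t' - r) by ring]
      exact dvd_sub (hg1 t) (hg ▸ hg1 t')
    have d2 : ((m / g t : ℕ) : ℤ) ∣ t - t' := by
      rw [show t - t' = t + r - (t' + r) by ring]
      exact dvd_sub (hh t ht2) (hg ▸ hh t' ht2')
    have d3 : (L (g t) : ℤ) ∣ t - t' := by
      have := Nat.lcm_dvd (Int.natCast_dvd.1 d1) (Int.natCast_dvd.1 d2)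
      exact Int.natCast_dvd.2 this
    rw [← hg] at hq
    have q1 : t / (L (g t) : ℤ) = t' / (L (g t) : ℤ) := by
      have a1 : 0 ≤ t / (L (g t) : ℤ) := Int.ediv_nonneg hta (by positivity)
      have a2 : 0 ≤ t' / (L (g t) : ℤ) := Int.ediv_nonneg hta' (by positivity)
      omega
    have q2 : t % (L (g t) : ℤ) = t' % (L (g t) : ℤ) :=
      Int.emod_eq_emod_iff_emod_sub_eq_zero.2 (Int.emod_eq_zero_of_dvd d3)
    rw [← Int.mul_ediv_add_emod t (L (g t)), ← Int.mul_ediv_add_emod t' (L (g t)), q1, q2]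

/-- The number of `0 ≤ b < 2a` with `b² ≡ D mod 4a`. -/
noncomputable def rootCount (D a : ℕ) : ℕ :=
  ((Finset.Ico (0 : ℤ) (2 * (a : ℤ))).filter
    (fun b => (4 * (a : ℤ)) ∣ b ^ 2 - (D : ℤ))).card

lemma rootCount_le (D a : ℕ) (hD : 0 < D) (ha : 0 < a) :
    (rootCount D a : ℝ) ≤ 8 * (4 * D + 1) * √a := by
  have h1 : rootCount D a ≤ (4 * a).divisors.card * (4 * D + 1) := by
    refine le_trans (Finset.card_le_card ?_) (card_sqrt_mod_le (4 * a) D (by omega) hD)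
    intro b hb
    simp only [Finset.mem_filter, Finset.mem_Ico] at hb ⊢
    push_cast
    exact ⟨⟨hb.1.1, by omega⟩, hb.2⟩
  have h2 := card_divisors_le_sqrt (4 * a)
  have h3 : ((4 * a).sqrt : ℝ) ≤ 2 * √a := by
    have : ((4 * a).sqrt : ℝ) ≤ √((4 * a : ℕ) : ℝ) := Real.nat_sqrt_le_real_sqrt
    refine this.trans (le_of_eq ?_)
    push_cast
    rw [Real.sqrt_mul (by norm_num), show (4:ℝ) = 2 ^ 2 by norm_num,
      Real.sqrt_sq (by norm_num)]
  have h4 : (1:ℝ) ≤ √a := by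
    rw [Real.one_le_sqrt]; exact_mod_cast ha
  have h5 : ((4 * a).divisors.card : ℝ) ≤ 8 * √a := by
    have : ((4 * a).divisors.card : ℝ) ≤ 2 * ((4 * a).sqrt + 1) := by exact_mod_cast h2
    linarith
  calc (rootCount D a : ℝ) ≤ (4 * a).divisors.card * (4 * D + 1) := by exact_mod_cast h1
    _ ≤ 8 * √a * (4 * D + 1) := by gcongr
    _ = _ := by ring

lemma summable_rootCount (D k N : ℕ) (hD : 0 < D) (hk : 2 ≤ k) :
    Summable (fun a : {a : ℕ // 0 < a ∧ N ∣ a} =>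
      ((a : ℝ)) ^ (-(k : ℤ)) * (rootCount D a : ℝ)) := by
  have hs : Summable (fun a : {a : ℕ // 0 < a ∧ N ∣ a} =>
      8 * (4 * (D:ℝ) + 1) * ((a : ℕ) : ℝ) ^ (-(3 / 2 : ℝ))) :=
    ((Real.summable_nat_rpow.2 (by norm_num)).comp_injective
      Subtype.val_injective).mul_left _
  refine Summable.of_nonneg_of_le (fun a => by positivity) (fun a => ?_) hs
  have ha : (1:ℝ) ≤ (a : ℕ) := by exact_mod_cast a.2.1
  have ha0 : (0:ℝ) < (a : ℕ) := by linarith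
  have h1 : ((a : ℕ) : ℝ) ^ (-(k : ℤ)) ≤ ((a : ℕ) : ℝ) ^ (-(2:ℝ)) := by
    rw [← Real.rpow_intCast]
    apply Real.rpow_le_rpow_of_exponent_le ha
    push_cast
    have : (2:ℝ) ≤ k := by exact_mod_cast hk
    linarith
  calc _ ≤ ((a : ℕ) : ℝ) ^ (-(2:ℝ)) * (8 * (4 * D + 1) * √(a : ℕ)) := by
        gcongr; exact rootCount_le D a hD a.2.1
    _ = 8 * (4 * D + 1) * (((a : ℕ) : ℝ) ^ (-(2:ℝ)) * ((a : ℕ) : ℝ) ^ (1/2 : ℝ)) := by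
        rw [Real.sqrt_eq_rpow]; ring
    _ = _ := by rw [← Real.rpow_add ha0]; norm_num

/-! ### The beta integral -/

lemma integral_one_sub_sq_pow (m : ℕ) :
    ∫ u in (-1:ℝ)..1, (1 - u ^ 2) ^ m =
      √π * Real.Gamma ((m : ℝ) + 1) / Real.Gamma ((m : ℝ) + 1 + 1 / 2) := by
  have h := integral_sin_pow_odd_mul_cos_pow (a := 0) (b := π) m 0
  simp only [pow_zero, mul_one, one_mul, Real.cos_pi, Real.cos_zero] at h
  rw [← h, integral_sin_pow_odd]
  induction m with
  | zero =>
    have : Real.Gamma (1 / 2 + 1) = 1 / 2 * √π := by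
      rw [Real.Gamma_add_one (by norm_num), Real.Gamma_one_half_eq]
    have hp : √π ≠ 0 := by positivity
    norm_num at this ⊢
    rw [this]; field_simp
  | succ n ih =>
    have h' := integral_sin_pow_odd_mul_cos_pow (a := 0) (b := π) n 0
    simp only [pow_zero, mul_one, one_mul, Real.cos_pi, Real.cos_zero] at h'
    rw [Finset.prod_range_succ, ← mul_assoc, ih h']
    have e1 : Real.Gamma (((n + 1 : ℕ) : ℝ) + 1) = (n + 1) * Real.Gamma ((n : ℝ) + 1) := by
      push_cast
      rw [Real.Gamma_add_one (by positivity)]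
    have e2 : Real.Gamma (((n + 1 : ℕ) : ℝ) + 1 + 1 / 2)
        = (n + 1 + 1 / 2) * Real.Gamma ((n : ℝ) + 1 + 1 / 2) := by
      push_cast
      rw [← Real.Gamma_add_one (by positivity)]
      congr 1; ring
    rw [e1, e2]
    have : Real.Gamma ((n : ℝ) + 1 + 1 / 2) ≠ 0 := (Real.Gamma_pos_of_pos (by positivity)).ne'
    field_simp
    ring

/-- The `n`-th power of the positive part of `d/(4A) - A y²`; this is the contribution of a form
`[-A, b, c]` of discriminant `d`, centred at its vertex. It is supported on `|y| ≤ √d/(2A)`. -/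
noncomputable def bump (A d : ℝ) (n : ℕ) (y : ℝ) : ℝ := (max 0 (d / (4 * A) - A * y ^ 2)) ^ n

lemma bump_eq_zero {A d : ℝ} (hA : 0 < A) (hd : 0 < d) {n : ℕ} (hn : n ≠ 0) {y : ℝ}
    (hy : √d / (2 * A) ≤ |y|) : bump A d n y = 0 := by
  have h1 : (√d / (2 * A)) ^ 2 ≤ y ^ 2 := by
    rw [← sq_abs y]; gcongr
  rw [div_pow, Real.sq_sqrt hd.le] at h1
  have h2 : d / (4 * A) = A * (d / (2 * A) ^ 2) := by field_simp; norm_num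
  rw [bump, max_eq_left, zero_pow hn]
  rw [h2]
  have := mul_le_mul_of_nonneg_left h1 hA.le
  linarith

lemma continuous_bump (A d : ℝ) (n : ℕ) : Continuous (bump A d n) := by
  unfold bump; fun_prop

lemma integrable_bump {A d : ℝ} (hA : 0 < A) (hd : 0 < d) {n : ℕ} (hn : n ≠ 0) :
    Integrable (bump A d n) := by
  refine (continuous_bump A d n).integrable_of_hasCompactSupport
    (HasCompactSupport.intro (isCompact_Icc (a := -(√d / (2 * A))) (b := √d / (2 * A))) ?_)
  intro y hy
  refine bump_eq_zero hA hd hn ?_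
  by_contra h
  exact hy (abs_le.1 (not_le.1 h).le)

lemma integral_bump {A d : ℝ} (hA : 0 < A) (hd : 0 < d) {n : ℕ} (hn : n ≠ 0) :
    ∫ y, bump A d n y = (d / (4 * A)) ^ n * (√d / (2 * A)) *
      (√π * Real.Gamma ((n : ℝ) + 1) / Real.Gamma ((n : ℝ) + 1 + 1 / 2)) := by
  set R := √d / (2 * A) with hR
  have hRpos : 0 < R := by positivity
  have h1 : ∫ y, bump A d n y = ∫ y in (-R)..R, bump A d n y := by
    rw [intervalIntegral.integral_of_le (by linarith)]
    symm
    apply setIntegral_eq_integral_of_forall_compl_eq_zero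
    intro y hy
    refine bump_eq_zero hA hd hn ?_
    by_contra h
    have := abs_lt.1 (not_le.1 h)
    exact hy ⟨this.1, this.2.le⟩
  have h2 : ∫ u in (-1:ℝ)..1, bump A d n (R * u) = R⁻¹ • ∫ y in (-R)..R, bump A d n y := by
    rw [intervalIntegral.integral_comp_mul_left _ hRpos.ne']; simp
  have h3 : ∫ u in (-1:ℝ)..1, bump A d n (R * u)
      = (d / (4 * A)) ^ n * ∫ u in (-1:ℝ)..1, (1 - u ^ 2) ^ n := by
    rw [← intervalIntegral.integral_const_mul]
    apply intervalIntegral.integral_congr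
    intro u hu
    rw [Set.uIcc_of_le (by norm_num)] at hu
    have hu2 : u ^ 2 ≤ 1 := by
      rw [sq_le_one_iff_abs_le_one]; exact abs_le.2 hu
    have : d / (4 * A) - A * (R * u) ^ 2 = d / (4 * A) * (1 - u ^ 2) := by
      rw [hR, mul_pow, div_pow, Real.sq_sqrt hd.le]; field_simp; ring
    simp only [bump]
    rw [this, max_eq_right (mul_nonneg (by positivity) (by linarith)), mul_pow]
  rw [h1, mul_right_comm, ← integral_one_sub_sq_pow, ← h3, h2, smul_eq_mul]
  field_simp

/-! ### Parametrizing the forms -/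

lemma shifted_root_dvd {D : ℕ} {A b : ℤ} (hb : 4 * A ∣ b ^ 2 - D) (n : ℤ) :
    4 * A ∣ (D : ℤ) - (b - 2 * A * n) ^ 2 := by
  rw [show (D : ℤ) - (b - 2 * A * n) ^ 2 = 4 * A * (n * b - A * n ^ 2) - (b ^ 2 - D) by ring]
  exact dvd_sub (dvd_mul_right _ _) hb

/-- Triples `(a, b₀, m)` with `N ∣ a`, `b₀` a square root of `D` modulo `4a` in `[0, 2a)`, and
`m ∈ ℤ` a translation. -/
abbrev FormIdx (N D : ℕ) :=
  Σ a : {a : ℕ // 0 < a ∧ N ∣ a}, {b // b ∈ (Finset.Ico (0 : ℤ) (2 * ((a : ℕ) : ℤ))).filter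
    (fun b => (4 * ((a : ℕ) : ℤ)) ∣ b ^ 2 - (D : ℤ))} × ℤ

/-- Forms `[a, b, c]`, as triples, of discriminant `D` with `N ∣ a` and `a < 0`. -/
abbrev NegForm (N D : ℕ) :=
  {p : ℤ × ℤ × ℤ // p.2.1 ^ 2 - 4 * p.1 * p.2.2 = (D : ℤ) ∧ (N : ℤ) ∣ p.1 ∧ p.1 < 0}

/-- The form `[-a, b₀ - 2am, c]` of discriminant `D` attached to `(a, b₀, m)`. The integer division
defining `c` is exact by `shifted_root_dvd`. -/
def toForm (N D : ℕ) (i : FormIdx N D) : NegForm N D :=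
  ⟨(-((i.1 : ℕ) : ℤ), i.2.1 - 2 * ((i.1 : ℕ) : ℤ) * i.2.2,
      ((D : ℤ) - (i.2.1 - 2 * ((i.1 : ℕ) : ℤ) * i.2.2) ^ 2) / (4 * ((i.1 : ℕ) : ℤ))), by
    obtain ⟨⟨a, ha, hN⟩, ⟨b, hb⟩, n⟩ := i
    have hb2 := (Finset.mem_filter.1 hb).2
    refine ⟨?_, ?_, ?_⟩
    · have := Int.mul_ediv_cancel' (shifted_root_dvd hb2 n)
      dsimp only at this ⊢
      linear_combination this
    · exact (dvd_neg).2 (by exact_mod_cast hN)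
    · dsimp only; omega⟩

lemma toForm_bijective (N D : ℕ) : Function.Bijective (toForm N D) := by
  constructor
  · rintro ⟨⟨a, ha, hN⟩, ⟨b, hb⟩, n⟩ ⟨⟨a', ha', hN'⟩, ⟨b', hb'⟩, n'⟩ h
    have h1 := congrArg (fun p => p.1.1) h
    have h2 := congrArg (fun p => p.1.2.1) h
    simp only [toForm] at h1 h2
    obtain rfl : a = a' := by omega
    have hbI := Finset.mem_Ico.1 (Finset.mem_filter.1 hb).1
    have hbI' := Finset.mem_Ico.1 (Finset.mem_filter.1 hb').1
    have hn : n = n' := by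
      dsimp only at hbI hbI'
      have ha2 : (0:ℤ) < a := by exact_mod_cast ha
      have h3 : 2 * (a:ℤ) * (n - n') = b - b' := by linear_combination -h2
      have h4 : n - n' < 1 := by
        by_contra hc
        nlinarith
      have h5 : -1 < n - n' := by
        by_contra hc
        nlinarith
      omega
    subst hn
    obtain rfl : b = b' := by linarith
    rfl
  · rintro ⟨⟨a, b, c⟩, h1, h2, h3⟩
    dsimp only at h1 h2 h3
    obtain ⟨m, rfl⟩ : ∃ m : ℕ, a = -(m : ℤ) := ⟨a.natAbs, by omega⟩
    have hm : 0 < m := by omega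
    have hm' : (0:ℤ) < 2 * (m:ℤ) := by omega
    have hem := Int.mul_ediv_add_emod b (2 * (m:ℤ))
    have hr : b % (2 * (m:ℤ)) = b - 2 * m * (b / (2 * (m:ℤ))) := by linarith
    refine ⟨⟨⟨m, hm, by exact_mod_cast (dvd_neg.1 h2)⟩, ⟨b % (2 * (m:ℤ)), ?_⟩,
      -(b / (2 * (m:ℤ)))⟩, ?_⟩
    · rw [Finset.mem_filter, Finset.mem_Ico]
      refine ⟨⟨Int.emod_nonneg _ hm'.ne', Int.emod_lt_of_pos _ hm'⟩, ?_⟩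
      rw [hr]
      refine ⟨-c - b * (b / (2 * (m:ℤ))) + m * (b / (2 * (m:ℤ))) ^ 2, ?_⟩
      linear_combination h1
    · apply Subtype.ext
      have hb : b % (2 * (m:ℤ)) - 2 * (m:ℤ) * -(b / (2 * (m:ℤ))) = b := by linarith
      simp only [toForm, hb, Prod.mk.injEq, true_and]
      apply Int.ediv_eq_of_eq_mul_right (by omega)
      linear_combination -h1

lemma toForm_eval (N D n : ℕ) (i : FormIdx N D) (x : ℝ) :
    (max 0 (((toForm N D i).1.1 : ℝ) * x ^ 2 + ((toForm N D i).1.2.1 : ℝ) * x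
        + ((toForm N D i).1.2.2 : ℝ))) ^ n
      = bump ((i.1 : ℕ) : ℝ) D n (x + (i.2.2 : ℤ) - (i.2.1 : ℤ) / (2 * ((i.1 : ℕ) : ℝ))) := by
  have h := (toForm N D i).2.1
  have ha : ((i.1 : ℕ) : ℝ) ≠ 0 := by exact_mod_cast i.1.2.1.ne'
  have e1 : (toForm N D i).1.1 = -((i.1 : ℕ) : ℤ) := rfl
  have e2 : (toForm N D i).1.2.1 = i.2.1 - 2 * ((i.1 : ℕ) : ℤ) * i.2.2 := rfl
  rw [e1, e2] at h
  rw [e1, e2, bump]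
  have hR := congrArg (Int.cast (R := ℝ)) h
  push_cast at hR ⊢
  rw [← hR]
  congr 2
  field_simp
  ring

/-- The defining series, which only involves the forms positive at `x`, is the sum of the positive
parts over all forms, because `n ≠ 0`; no convergence is needed. -/
lemma tsum_forms (N D n : ℕ) (hn : n ≠ 0) (x : ℝ) :
    ∑' p : {p : ℤ × ℤ × ℤ //
          p.2.1 ^ 2 - 4 * p.1 * p.2.2 = (D : ℤ) ∧ (N : ℤ) ∣ p.1 ∧ p.1 < 0 ∧
          0 < (p.1 : ℝ) * x ^ 2 + (p.2.1 : ℝ) * x + (p.2.2 : ℝ)},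
        ((p.1.1 : ℝ) * x ^ 2 + (p.1.2.1 : ℝ) * x + (p.1.2.2 : ℝ)) ^ n
      = ∑' i : FormIdx N D, bump ((i.1 : ℕ) : ℝ) D n
          (x + (i.2.2 : ℤ) - (i.2.1 : ℤ) / (2 * ((i.1 : ℕ) : ℝ))) := by
  let q : ℤ × ℤ × ℤ → ℝ := fun p => (p.1 : ℝ) * x ^ 2 + (p.2.1 : ℝ) * x + (p.2.2 : ℝ)
  have h1 : ∑' i : FormIdx N D, bump ((i.1 : ℕ) : ℝ) D n
          (x + (i.2.2 : ℤ) - (i.2.1 : ℤ) / (2 * ((i.1 : ℕ) : ℝ)))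
      = ∑' p : NegForm N D, (max 0 (q p.1)) ^ n := by
    rw [← (Equiv.ofBijective _ (toForm_bijective N D)).tsum_eq]
    exact tsum_congr fun i => (toForm_eval N D n i x).symm
  rw [h1]
  have h2 := tsum_subtype {p : ℤ × ℤ × ℤ |
          p.2.1 ^ 2 - 4 * p.1 * p.2.2 = (D : ℤ) ∧ (N : ℤ) ∣ p.1 ∧ p.1 < 0 ∧ 0 < q p}
          (fun p => q p ^ n)
  have h3 := tsum_subtype {p : ℤ × ℤ × ℤ |
          p.2.1 ^ 2 - 4 * p.1 * p.2.2 = (D : ℤ) ∧ (N : ℤ) ∣ p.1 ∧ p.1 < 0}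
          (fun p => (max 0 (q p)) ^ n)
  refine h2.trans (Eq.trans (tsum_congr fun p => ?_) h3.symm)
  simp only [Set.indicator, Set.mem_ofPred_eq]
  by_cases hq : 0 < q p
  · simp [hq, max_eq_right hq.le]
  · simp [hq, max_eq_left (not_lt.1 hq), hn]

/-! ### The average value -/

/-- Average value of `𝒮(x) = ∑_{a<0<Q(x,1)} Q(x,1)^{k-1}` over `[0,1]`:
`∫₀¹ 𝒮(x) dx = (√π Γ(k)/(2^{2k-1} Γ(k+1/2))) D^{k-1/2}
  ∑_{a ≥ 1, N∣a} a^{-k} #{0 ≤ b < 2a : 4a ∣ b² - D}`. -/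
theorem average_value_of_local_polynomial
    (N D k : ℕ) (hN : 0 < N) (hD : 0 < D) (hDns : ¬ IsSquare D) (hk : 2 ≤ k)
    (S : ℝ → ℝ)
    (hS : ∀ x : ℝ, S x =
      ∑' p : {p : ℤ × ℤ × ℤ //
          p.2.1 ^ 2 - 4 * p.1 * p.2.2 = (D : ℤ) ∧ (N : ℤ) ∣ p.1 ∧ p.1 < 0 ∧
          0 < (p.1 : ℝ) * x ^ 2 + (p.2.1 : ℝ) * x + (p.2.2 : ℝ)},
        ((p.1.1 : ℝ) * x ^ 2 + (p.1.2.1 : ℝ) * x + (p.1.2.2 : ℝ)) ^ (k - 1)) :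
    ∫ x in (0:ℝ)..1, S x =
      Real.sqrt Real.pi * Real.Gamma (k : ℝ) /
          ((2 : ℝ) ^ (2 * k - 1) * Real.Gamma ((k : ℝ) + 1 / 2)) *
        (D : ℝ) ^ ((k : ℝ) - 1 / 2) *
        ∑' a : {a : ℕ // 0 < a ∧ N ∣ a},
          ((a : ℝ)) ^ (-(k : ℤ)) *
            (((Finset.Ico (0 : ℤ) (2 * (a : ℤ))).filter
                (fun b => (4 * (a : ℤ)) ∣ b ^ 2 - (D : ℤ))).card : ℝ) := by
  obtain ⟨n, rfl⟩ : ∃ n, k = n + 1 := ⟨k - 1, by omega⟩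
  have hn : n ≠ 0 := by omega
  have hD' : (0:ℝ) < D := by exact_mod_cast hD
  simp only [Nat.add_sub_cancel] at hS
  set C : ℝ := √π * Real.Gamma ((n + 1 : ℕ) : ℝ) /
          ((2 : ℝ) ^ (2 * (n + 1) - 1) * Real.Gamma (((n + 1 : ℕ) : ℝ) + 1 / 2)) *
        (D : ℝ) ^ (((n + 1 : ℕ) : ℝ) - 1 / 2) with hC
  let F : FormIdx N D → ℝ → ℝ := fun i x => bump ((i.1 : ℕ) : ℝ) D n
          (x + (i.2.2 : ℤ) - (i.2.1 : ℤ) / (2 * ((i.1 : ℕ) : ℝ)))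
  have hSF : ∀ x, S x = ∑' i, F i x := fun x => (hS x).trans (tsum_forms N D n hn x)
  have hFnn : ∀ i x, 0 ≤ F i x := fun i x => pow_nonneg (le_max_left _ _) _
  have hFc : ∀ i, Continuous (F i) := fun i => (continuous_bump _ _ _).comp (by fun_prop)
  have hbump : ∀ a : {a : ℕ // 0 < a ∧ N ∣ a},
      ∫ y, bump ((a : ℕ) : ℝ) D n y = C * ((a : ℕ) : ℝ) ^ (-((n + 1 : ℕ) : ℤ)) := by
    intro a
    have ha : (0:ℝ) < (a : ℕ) := by exact_mod_cast a.2.1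
    rw [integral_bump ha hD' hn, hC]
    have e1 : (D : ℝ) ^ (((n + 1 : ℕ) : ℝ) - 1 / 2) = (D:ℝ) ^ n * √D := by
      rw [Real.sqrt_eq_rpow, ← Real.rpow_natCast, ← Real.rpow_add hD']
      congr 1; push_cast; ring
    have e2 : 2 * (n + 1) - 1 = 2 * n + 1 := by omega
    have hG : Real.Gamma ((n : ℝ) + 1 + 1 / 2) ≠ 0 := (Real.Gamma_pos_of_pos (by positivity)).ne'
    rw [e1, e2, zpow_neg, zpow_natCast, div_pow, mul_pow, pow_succ 2 (2 * n), pow_mul]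
    push_cast
    rw [show (2:ℝ) ^ 2 = 4 by norm_num, pow_succ]
    field_simp
  -- Summing over the translation `m` unfolds `[0,1]` to the whole line.
  have hinner : ∀ (a : {a : ℕ // 0 < a ∧ N ∣ a}) b,
      HasSum (fun m : ℤ => ∫ x in (0:ℝ)..1, F ⟨a, b, m⟩ x)
        (C * ((a : ℕ) : ℝ) ^ (-((n + 1 : ℕ) : ℤ))) := by
    intro a b
    have ha : (0:ℝ) < (a : ℕ) := by exact_mod_cast a.2.1
    have hi := (integrable_bump ha hD' hn).comp_sub_right (((b : ℤ) : ℝ) / (2 * ((a : ℕ) : ℝ)))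
    have := hi.hasSum_intervalIntegral_comp_add_int
    rw [integral_sub_right_eq_self (bump ((a : ℕ) : ℝ) D n), hbump] at this
    exact this
  have hInn : ∀ i, 0 ≤ ∫ x in (0:ℝ)..1, F i x := fun i =>
    intervalIntegral.integral_nonneg (by norm_num) fun x _ => hFnn i x
  have hfib : ∀ a : {a : ℕ // 0 < a ∧ N ∣ a},
      HasSum (fun bm => ∫ x in (0:ℝ)..1, F ⟨a, bm⟩ x)
        (C * (((a : ℕ) : ℝ) ^ (-((n + 1 : ℕ) : ℤ)) * (rootCount D a : ℝ))) := by
    intro a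
    -- For fixed `a` there are finitely many `b₀`, each contributing the same amount.
    have hs : Summable (fun bm => ∫ x in (0:ℝ)..1, F ⟨a, bm⟩ x) := by
      rw [summable_prod_of_nonneg (fun _ => hInn _)]
      exact ⟨fun b => (hinner a b).summable, Summable.of_finite⟩
    have := hs.hasSum.prod_fiberwise (fun b => hinner a b)
    have hu := this.unique (hasSum_fintype _)
    rw [Finset.sum_const, Finset.card_univ, Fintype.card_coe, nsmul_eq_mul] at hu
    rw [show C * (((a : ℕ) : ℝ) ^ (-((n + 1 : ℕ) : ℤ)) * (rootCount D a : ℝ))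
      = (rootCount D a : ℝ) * (C * ((a : ℕ) : ℝ) ^ (-((n + 1 : ℕ) : ℤ))) by ring]
    rw [rootCount, ← hu]
    exact hs.hasSum
  have hsR := (summable_rootCount D (n + 1) N hD hk).mul_left C
  have hsum : Summable (fun i => ∫ x in (0:ℝ)..1, F i x) := by
    rw [summable_sigma_of_nonneg hInn]
    refine ⟨fun a => (hfib a).summable, ?_⟩
    simpa only [(hfib _).tsum_eq] using hsR
  have hmain : ∫ x in (0:ℝ)..1, S x = ∑' i, ∫ x in (0:ℝ)..1, F i x := by
    simp only [hSF]
    simp only [intervalIntegral.integral_of_le (zero_le_one' ℝ)] at hsum ⊢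
    symm
    refine integral_tsum_of_summable_integral_norm (fun i => ?_) ?_
    · exact ((hFc i).integrableOn_Icc).mono_set Set.Ioc_subset_Icc_self
    · simpa only [Real.norm_of_nonneg (hFnn _ _)] using hsum
  rw [hmain, hsum.tsum_sigma' (fun a => (hfib a).summable)]
  simp only [(hfib _).tsum_eq]
  rw [tsum_mul_left]
  rfl
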